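/- N^{(2)}(x) ≤ 2·N^{(4)}(x) for every finitely supported x : ℕ → ℝ. -/

import Mathlib

/-!
Both norms are generated by repeatedly averaging over successive families, so it is natural to
decompose each `N2`-step into `N4`-steps. The claim proved by induction on the iteration
(`N2Aux_le_cut`) is stronger than the theorem: for each `k` and `E` there is a cut point `s` with
`N2Aux k (E x) ≤ N4 ((E ∩ [0, s)) x) + N4 ((E ∩ [s, ∞)) x)`. Both terms are at most `N4 x` when `E`
is the support of `x`.

For the inductive step (`regroup`), let `P`, `F`, `Q` be the sets before, inside and after the
distinguished slot: at most `n` sets in `P` and `Q` together, all above `n`, and `m` sets in `F`,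
all above `m`. The induction hypothesis cuts each of them into two pieces, and the resulting
successive pieces must be divided into an initial and a final group, each of at most `3 r` pieces
lying above `r` for some `r`. If all of `P` is empty, the groups are `F` (`2 m` pieces) and
`Q` (at most `2 n` pieces); if all of `F` is empty, they are `P` and `Q`. Otherwise everything lies
above `n`, while `F` and `Q` lie above `m`; the first group consists of the first `3 n` pieces,
which exhaust `P`, and at most `2 (n + m) - 3 n ≤ 3 m` pieces are left for the second group.
-/

noncomputable section

/-- sup norm of a finitely supported sequence -/
def supNorm (x : ℕ →₀ ℝ) : ℝ := ⨆ i, |x i|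

/-- coordinate restriction of `x` to the finite set `E` -/
def restr (E : Finset ℕ) (x : ℕ →₀ ℝ) : ℕ →₀ ℝ := x.filter (· ∈ E)

/-- an admissible family of `m` successive finite sets whose elements are `≥ n`. -/
def AdmissibleOn (n m : ℕ) (E : Fin m → Finset ℕ) : Prop :=
  (∀ i j : Fin m, i < j → ∀ a ∈ E i, ∀ b ∈ E j, a < b) ∧
  (∀ i : Fin m, ∀ a ∈ E i, n ≤ a)

/-- `n ≤ E 0 < ⋯ < E (n-1)` -/
def Admissible (n : ℕ) (E : Fin n → Finset ℕ) : Prop := AdmissibleOn n n E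

/-- the family `F` lies strictly between `E (i₀ - 1)` and `E (i₀ + 1)`. -/
def Between {n : ℕ} (E : Fin n → Finset ℕ) (i₀ : Fin n) {m : ℕ}
    (F : Fin m → Finset ℕ) : Prop :=
  ∀ j : Fin m, ∀ b ∈ F j,
    (∀ i : Fin n, i < i₀ → ∀ a ∈ E i, a < b) ∧
    (∀ i : Fin n, i₀ < i → ∀ a ∈ E i, b < a)

/-- the iteration defining `N_c^{(1)}`. -/
def N1Aux (c : ℝ) : ℕ → (ℕ →₀ ℝ) → ℝ
  | 0, x => supNorm x
  | k + 1, x => max (supNorm x)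
      (sSup {r : ℝ | ∃ (n : ℕ) (E : Fin n → Finset ℕ) (i₀ : Fin n), Admissible n E ∧
        r = (1 / 2) * (∑ i ∈ Finset.univ.erase i₀, N1Aux c k (restr (E i) x)) +
            c * N1Aux c k (restr (E i₀) x)})

/-- `N_c^{(1)}`, the increasing limit of its iteration. -/
def N1 (c : ℝ) (x : ℕ →₀ ℝ) : ℝ := ⨆ k, N1Aux c k x

/-- the iteration defining `N_c^{(2)}`. -/
def N2Aux (c : ℝ) : ℕ → (ℕ →₀ ℝ) → ℝ
  | 0, x => supNorm x
  | k + 1, x => max (supNorm x)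
      (sSup {r : ℝ | ∃ (n : ℕ) (E : Fin n → Finset ℕ) (i₀ : Fin n), Admissible n E ∧
        r = (1 / 2) * (∑ i ∈ Finset.univ.erase i₀, N2Aux c k (restr (E i) x)) +
            c * sSup {t : ℝ | ∃ (m : ℕ) (F : Fin m → Finset ℕ),
                  Admissible m F ∧ Between E i₀ F ∧
                  t = ∑ j, N2Aux c k (restr (F j) x)}})

/-- `N_c^{(2)}`, the increasing limit of its iteration. -/
def N2 (c : ℝ) (x : ℕ →₀ ℝ) : ℝ := ⨆ k, N2Aux c k x

/-- `N^{(3)}(x) = max (‖x‖_∞, sup {(1/2) ∑ N^{(2)}(E_i x) : n ≤ E_1 < ⋯ < E_n})`,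
where `N^{(2)} = N_{1/2}^{(2)}`. -/
def N3 (x : ℕ →₀ ℝ) : ℝ :=
  max (supNorm x)
    (sSup {r : ℝ | ∃ (n : ℕ) (E : Fin n → Finset ℕ), 0 < n ∧ Admissible n E ∧
      r = (1 / 2) * ∑ i, N2 (1 / 2) (restr (E i) x)})

/-- the iteration defining `N^{(4)}`:  at each step
`N^{(4)}(x) = max (‖x‖_∞, sup {(1/2) ∑_{i=1}^{3n} N^{(4)}(E_i x) : n ≤ E_1 < ⋯ < E_{3n}})`. -/
def N4Aux : ℕ → (ℕ →₀ ℝ) → ℝ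
  | 0, x => supNorm x
  | k + 1, x => max (supNorm x)
      (sSup {r : ℝ | ∃ (n : ℕ) (E : Fin (3 * n) → Finset ℕ), 0 < n ∧
        AdmissibleOn n (3 * n) E ∧
        r = (1 / 2) * ∑ i, N4Aux k (restr (E i) x)})

/-- `N^{(4)}`, the increasing limit of its iteration. -/
def N4 (x : ℕ →₀ ℝ) : ℝ := ⨆ k, N4Aux k x

/-! ### Elementary properties of restrictions and of `N4` -/

theorem restr_restr (A B : Finset ℕ) (x : ℕ →₀ ℝ) :
    restr A (restr B x) = restr (A ∩ B) x := by
  ext i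
  simp only [restr, Finsupp.filter_apply, Finset.mem_inter]
  split_ifs <;> simp_all

theorem restr_support (x : ℕ →₀ ℝ) : restr x.support x = x := by
  ext i
  simp only [restr, Finsupp.filter_apply]
  split_ifs with h
  · rfl
  · exact (Finsupp.notMem_support_iff.1 h).symm

/-- The `ℓ₁` norm, a common upper bound for all the iterates `N4Aux k`. -/
def l1 (x : ℕ →₀ ℝ) : ℝ := ∑ a ∈ x.support, |x a|

theorem sum_abs_le_l1 (S : Finset ℕ) (x : ℕ →₀ ℝ) : ∑ a ∈ S, |x a| ≤ l1 x := by
  rw [l1, ← Finset.sum_filter_ne_zero]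
  apply Finset.sum_le_sum_of_subset_of_nonneg
  · intro a ha
    simpa using (Finset.mem_filter.1 ha).2
  · intros; positivity

theorem l1_restr (E : Finset ℕ) (x : ℕ →₀ ℝ) : l1 (restr E x) ≤ ∑ a ∈ E, |x a| := by
  have h : ∀ a ∈ (restr E x).support, a ∈ E ∧ |restr E x a| = |x a| := by
    intro a ha
    have h1 : a ∈ E := by
      by_contra h2
      simp [restr, h2] at ha
    exact ⟨h1, by simp [restr, h1]⟩
  rw [l1, Finset.sum_congr rfl fun a ha => (h a ha).2]
  exact Finset.sum_le_sum_of_subset_of_nonneg (fun a ha => (h a ha).1) (by intros; positivity)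

theorem abs_le_l1 (x : ℕ →₀ ℝ) (i : ℕ) : |x i| ≤ l1 x := by
  simpa using sum_abs_le_l1 {i} x

theorem l1_nonneg (x : ℕ →₀ ℝ) : 0 ≤ l1 x := Finset.sum_nonneg (by intros; positivity)

theorem supNorm_nonneg (x : ℕ →₀ ℝ) : 0 ≤ supNorm x :=
  Real.iSup_nonneg (by intros; positivity)

theorem supNorm_le_l1 (x : ℕ →₀ ℝ) : supNorm x ≤ l1 x :=
  ciSup_le (abs_le_l1 x)

theorem supNorm_restr_le (A : Finset ℕ) (x : ℕ →₀ ℝ) : supNorm (restr A x) ≤ supNorm x := by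
  apply ciSup_le
  intro i
  refine le_trans ?_ (le_ciSup (f := fun i => |x i|) ⟨l1 x, ?_⟩ i)
  · simp only [restr, Finsupp.filter_apply]
    split_ifs <;> simp
  · rintro _ ⟨i, rfl⟩
    exact abs_le_l1 x i

theorem sum_l1_le {n m : ℕ} {E : Fin m → Finset ℕ} (hE : AdmissibleOn n m E) (x : ℕ →₀ ℝ) :
    ∑ i, l1 (restr (E i) x) ≤ l1 x := by
  refine (Finset.sum_le_sum fun i _ => l1_restr (E i) x).trans ?_
  rw [← Finset.sum_biUnion]
  · exact sum_abs_le_l1 _ x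
  · intro i _ j _ hij
    rw [Function.onFun, Finset.disjoint_left]
    intro a hi hj
    rcases lt_or_gt_of_ne hij with h | h
    · exact lt_irrefl _ (hE.1 i j h a hi a hj)
    · exact lt_irrefl _ (hE.1 j i h a hj a hi)

theorem N4Aux_nonneg (k : ℕ) (x : ℕ →₀ ℝ) : 0 ≤ N4Aux k x := by
  cases k with
  | zero => exact supNorm_nonneg x
  | succ k => exact le_max_of_le_left (supNorm_nonneg x)

theorem N4Aux_le_l1 (k : ℕ) : ∀ x : ℕ →₀ ℝ, N4Aux k x ≤ l1 x := by
  induction k with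
  | zero => exact supNorm_le_l1
  | succ k ih =>
    intro x
    refine max_le (supNorm_le_l1 x) (Real.sSup_le ?_ (l1_nonneg x))
    rintro _ ⟨n, E, _, hE, rfl⟩
    have h1 := (Finset.sum_le_sum fun i (_ : i ∈ Finset.univ) => ih (restr (E i) x)).trans
      (sum_l1_le hE x)
    linarith [l1_nonneg x]

theorem le_N4Aux_succ (k : ℕ) (x : ℕ →₀ ℝ) {n : ℕ} (hn : 0 < n) {E : Fin (3 * n) → Finset ℕ}
    (hE : AdmissibleOn n (3 * n) E) :
    (1 / 2) * ∑ i, N4Aux k (restr (E i) x) ≤ N4Aux (k + 1) x := by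
  refine le_max_of_le_right (le_csSup ⟨l1 x, ?_⟩ ⟨n, E, hn, hE, rfl⟩)
  rintro _ ⟨n, E, _, hE, rfl⟩
  have h1 := (Finset.sum_le_sum fun i (_ : i ∈ Finset.univ) => N4Aux_le_l1 k (restr (E i) x)).trans
    (sum_l1_le hE x)
  linarith [l1_nonneg x]

theorem N4Aux_le_succ (k : ℕ) : ∀ x : ℕ →₀ ℝ, N4Aux k x ≤ N4Aux (k + 1) x := by
  induction k with
  | zero => exact fun x => le_max_left _ _
  | succ k ih =>
    intro x
    refine max_le (le_max_left _ _) (Real.sSup_le ?_ (N4Aux_nonneg _ x))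
    rintro _ ⟨n, E, hn, hE, rfl⟩
    refine le_trans ?_ (le_N4Aux_succ (k + 1) x hn hE)
    gcongr
    exact ih _

theorem N4Aux_restr_le (k : ℕ) : ∀ (A : Finset ℕ) (x : ℕ →₀ ℝ),
    N4Aux k (restr A x) ≤ N4Aux k x := by
  induction k with
  | zero => exact supNorm_restr_le
  | succ k ih =>
    intro A x
    refine max_le (le_max_of_le_left (supNorm_restr_le A x)) (Real.sSup_le ?_ (N4Aux_nonneg _ x))
    rintro _ ⟨n, E, hn, hE, rfl⟩
    refine le_trans ?_ (le_N4Aux_succ k x hn hE)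
    gcongr with i
    rw [restr_restr, Finset.inter_comm, ← restr_restr]
    exact ih _ _

theorem N4_bddAbove (x : ℕ →₀ ℝ) : BddAbove (Set.range fun k => N4Aux k x) := by
  refine ⟨l1 x, ?_⟩
  rintro _ ⟨k, rfl⟩
  exact N4Aux_le_l1 k x

theorem N4Aux_le_N4 (k : ℕ) (x : ℕ →₀ ℝ) : N4Aux k x ≤ N4 x :=
  le_ciSup (N4_bddAbove x) k

theorem N4_nonneg (x : ℕ →₀ ℝ) : 0 ≤ N4 x := (N4Aux_nonneg 0 x).trans (N4Aux_le_N4 0 x)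

theorem supNorm_le_N4 (x : ℕ →₀ ℝ) : supNorm x ≤ N4 x := N4Aux_le_N4 0 x

theorem N4_restr_le (A : Finset ℕ) (x : ℕ →₀ ℝ) : N4 (restr A x) ≤ N4 x :=
  ciSup_mono (N4_bddAbove x) fun k => N4Aux_restr_le k A x

theorem N4_restr_empty (x : ℕ →₀ ℝ) : N4 (restr ∅ x) = 0 := by
  refine le_antisymm (ciSup_le fun k => (N4Aux_le_l1 k _).trans ?_) (N4_nonneg _)
  simpa using l1_restr ∅ x

theorem N4_tendsto (x : ℕ →₀ ℝ) :
    Filter.Tendsto (fun k => N4Aux k x) Filter.atTop (nhds (N4 x)) :=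
  tendsto_atTop_ciSup (monotone_nat_of_le_succ fun k => N4Aux_le_succ k x) (N4_bddAbove x)

/-- One half of the implicit equation for `N4`, obtained from the iteration in the limit. -/
theorem le_N4 (x : ℕ →₀ ℝ) {n : ℕ} (hn : 0 < n) {E : Fin (3 * n) → Finset ℕ}
    (hE : AdmissibleOn n (3 * n) E) :
    (1 / 2) * ∑ i, N4 (restr (E i) x) ≤ N4 x :=
  le_of_tendsto' ((tendsto_finsetSum _ fun i _ => N4_tendsto (restr (E i) x)).const_mul _)
    fun k => (le_N4Aux_succ k x hn hE).trans (N4Aux_le_N4 _ x)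

/-! ### Lists of successive sets -/

/-- `A < B` for finite sets (vacuous if one of them is empty). -/
def Before (A B : Finset ℕ) : Prop := ∀ a ∈ A, ∀ b ∈ B, a < b

/-- The list form of `le_N4`: lists of length less than `3 n` are padded with empty sets. For
`n = 0` the list is empty and the claim is `0 ≤ N4 (restr E x)`. -/
theorem list_le_N4 (x : ℕ →₀ ℝ) (E : Finset ℕ) (n : ℕ) (L : List (Finset ℕ))
    (hlen : L.length ≤ 3 * n) (hp : L.Pairwise Before) (hn : ∀ A ∈ L, ∀ a ∈ A, n ≤ a)
    (hE : ∀ A ∈ L, A ⊆ E) :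
    (1 / 2) * (L.map fun A => N4 (restr A x)).sum ≤ N4 (restr E x) := by
  rcases Nat.eq_zero_or_pos n with rfl | hpos
  · have : L = [] := List.length_eq_zero_iff.1 (by omega)
    subst this
    simpa using N4_nonneg _
  have hadm : AdmissibleOn n (3 * n) (fun i => L.getD i ∅) := by
    constructor
    · intro i j hij a ha b hb
      by_cases hj : (j : ℕ) < L.length
      · have hi : (i : ℕ) < L.length := lt_trans hij hj
        simp only [List.getD_eq_getElem _ _ hi, List.getD_eq_getElem _ _ hj] at ha hb
        exact List.pairwise_iff_getElem.1 hp i j hi hj hij a ha b hb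
      · simp only [List.getD_eq_default _ _ (not_lt.1 hj), Finset.notMem_empty] at hb
    · intro i a ha
      by_cases hi : (i : ℕ) < L.length
      · simp only [List.getD_eq_getElem _ _ hi] at ha
        exact hn _ (List.getElem_mem hi) a ha
      · simp only [List.getD_eq_default _ _ (not_lt.1 hi), Finset.notMem_empty] at ha
  refine le_trans (le_of_eq ?_) (le_N4 (restr E x) hpos hadm)
  congr 1
  rw [Fin.sum_univ_eq_sum_range (fun i => N4 (restr (L.getD i ∅) (restr E x))) (3 * n),
    ← Finset.sum_subset (Finset.range_subset_range.2 hlen), ← Fin.sum_univ_eq_sum_range,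
    ← Fin.sum_univ_fun_getElem]
  · refine Finset.sum_congr rfl fun i _ => ?_
    rw [List.getD_eq_getElem _ _ i.2, restr_restr,
      Finset.inter_eq_left.2 (hE _ (List.getElem_mem i.2))]
  · intro i _ hi
    rw [List.getD_eq_default _ _ (by simpa using hi), restr_restr, Finset.empty_inter,
      N4_restr_empty]

/-- `N4` of the part of `E` below `s`, plus `N4` of the part from `s` on. -/
def cut (x : ℕ →₀ ℝ) (E : Finset ℕ) (s : ℕ) : ℝ :=
  N4 (restr (E.filter (· < s)) x) + N4 (restr (E.filter (s ≤ ·)) x)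

theorem exists_max_cut (x : ℕ →₀ ℝ) (E : Finset ℕ) : ∃ s, ∀ t, cut x E t ≤ cut x E s := by
  obtain ⟨s, _, hs⟩ := Finset.exists_max_image (Finset.range (E.sup id + 2)) (cut x E) ⟨0, by simp⟩
  refine ⟨s, fun t => ?_⟩
  by_cases ht : t < E.sup id + 2
  · exact hs t (by simpa using ht)
  -- beyond `max E` the cut no longer depends on its position
  · refine le_trans (le_of_eq ?_) (hs (E.sup id + 1) (by simp))
    have h : ∀ a ∈ E, a ≤ E.sup id := fun a ha => Finset.le_sup (f := id) ha
    unfold cut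
    congr 3
    · apply Finset.filter_congr
      intro a ha
      have := h a ha
      constructor <;> intro <;> omega
    · apply Finset.filter_congr
      intro a ha
      have := h a ha
      constructor <;> intro <;> omega

/-- Two consecutive lists of successive sets, each admissible for `N4`, are separated by a
single cut. -/
theorem two_lists (x : ℕ →₀ ℝ) (E : Finset ℕ) (n₁ n₂ : ℕ) (L₁ L₂ : List (Finset ℕ))
    (hp : (L₁ ++ L₂).Pairwise Before) (hE : ∀ A ∈ L₁ ++ L₂, A ⊆ E)
    (hl₁ : L₁.length ≤ 3 * n₁) (hl₂ : L₂.length ≤ 3 * n₂)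
    (hn₁ : ∀ A ∈ L₁, ∀ a ∈ A, n₁ ≤ a) (hn₂ : ∀ A ∈ L₂, ∀ a ∈ A, n₂ ≤ a) :
    ∃ s, (1 / 2) * ((L₁ ++ L₂).map fun A => N4 (restr A x)).sum ≤ cut x E s := by
  obtain ⟨hp₁, hp₂, hp₁₂⟩ := List.pairwise_append.1 hp
  have hex : ∃ s, (∀ A ∈ L₁, ∀ a ∈ A, a < s) ∧ ∀ A ∈ L₂, ∀ a ∈ A, s ≤ a := by
    refine ⟨(L₁.toFinset.biUnion id).sup (· + 1), ?_, ?_⟩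
    · intro A hA a ha
      have hmem : a ∈ L₁.toFinset.biUnion id :=
        Finset.mem_biUnion.2 ⟨A, List.mem_toFinset.2 hA, ha⟩
      exact Finset.le_sup (f := (· + 1)) hmem
    · intro B hB b hb
      refine Finset.sup_le fun a ha => ?_
      obtain ⟨A, hA, ha⟩ := Finset.mem_biUnion.1 ha
      exact hp₁₂ A (by simpa using hA) B hB a ha b hb
  obtain ⟨s, hs₁, hs₂⟩ := hex
  refine ⟨s, ?_⟩
  rw [List.map_append, List.sum_append, mul_add]
  refine add_le_add (list_le_N4 x _ n₁ L₁ hl₁ hp₁ hn₁ ?_) (list_le_N4 x _ n₂ L₂ hl₂ hp₂ hn₂ ?_)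
  · intro A hA a ha
    exact Finset.mem_filter.2 ⟨hE A (by simp [hA]) ha, hs₁ A hA a ha⟩
  · intro A hA a ha
    exact Finset.mem_filter.2 ⟨hE A (by simp [hA]) ha, hs₂ A hA a ha⟩

/-- Replace each set `A` of the list by its two parts below and above the cut `s A`. -/
def dbl (s : Finset ℕ → ℕ) (L : List (Finset ℕ)) : List (Finset ℕ) :=
  L.flatMap fun A => [A.filter (· < s A), A.filter (s A ≤ ·)]

theorem dbl_append (s : Finset ℕ → ℕ) (L M : List (Finset ℕ)) :
    dbl s (L ++ M) = dbl s L ++ dbl s M := List.flatMap_append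

theorem length_dbl (s : Finset ℕ → ℕ) (L : List (Finset ℕ)) :
    (dbl s L).length = 2 * L.length := by
  induction L with
  | nil => rfl
  | cons A L ih =>
    simp only [dbl, List.flatMap_cons, List.length_append, List.length_cons, List.length_nil] at *
    omega

theorem mem_dbl {s : Finset ℕ → ℕ} {L : List (Finset ℕ)} {B : Finset ℕ} (h : B ∈ dbl s L) :
    ∃ A ∈ L, B ⊆ A := by
  obtain ⟨A, hA, hB⟩ := List.mem_flatMap.1 h
  refine ⟨A, hA, ?_⟩
  simp only [List.mem_cons, List.not_mem_nil, or_false] at hB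
  rcases hB with rfl | rfl <;> exact Finset.filter_subset _ _

theorem pairwise_dbl (s : Finset ℕ → ℕ) {L : List (Finset ℕ)} (h : L.Pairwise Before) :
    (dbl s L).Pairwise Before := by
  induction L with
  | nil => exact List.Pairwise.nil
  | cons A L ih =>
    obtain ⟨h1, h2⟩ := List.pairwise_cons.1 h
    change ([_, _] ++ dbl s L).Pairwise Before
    refine List.pairwise_append.2 ⟨?_, ih h2, ?_⟩
    · rw [List.pairwise_pair]
      intro a ha b hb
      exact lt_of_lt_of_le (Finset.mem_filter.1 ha).2 (Finset.mem_filter.1 hb).2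
    · intro B hB C hC a ha c hc
      obtain ⟨D, hD, hCD⟩ := mem_dbl hC
      refine h1 D hD a ?_ c (hCD hc)
      simp only [List.mem_cons, List.not_mem_nil, or_false] at hB
      rcases hB with rfl | rfl <;> exact (Finset.mem_filter.1 ha).1

theorem sum_dbl (x : ℕ →₀ ℝ) (s : Finset ℕ → ℕ) (L : List (Finset ℕ)) :
    ((dbl s L).map fun A => N4 (restr A x)).sum = (L.map fun A => cut x A (s A)).sum := by
  induction L with
  | nil => rfl
  | cons A L ih =>
    change (([_, _] ++ dbl s L).map _).sum = _
    rw [List.map_append, List.sum_append, ih]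
    simp [cut]

theorem cut_empty (x : ℕ →₀ ℝ) (s : ℕ) : cut x ∅ s = 0 := by
  simp [cut, N4_restr_empty]

theorem sum_cut_eq_zero (x : ℕ →₀ ℝ) (s : Finset ℕ → ℕ) (L : List (Finset ℕ))
    (h : ∀ A ∈ L, A = ∅) : (L.map fun A => cut x A (s A)).sum = 0 := by
  apply List.sum_eq_zero
  intro r hr
  obtain ⟨A, hA, rfl⟩ := List.mem_map.1 hr
  rw [h A hA, cut_empty]

/-! ### Counting: regrouping into two admissible families -/

/-- The combinatorial heart of the proof. `P`, `F`, `Q` are the sets before, in and after the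
distinguished slot of an `N2`-admissible family; after each set has been cut in two, the pieces
are regrouped into two `N4`-admissible families separated by a single cut. -/
theorem regroup (x : ℕ →₀ ℝ) (E : Finset ℕ) (s : Finset ℕ → ℕ) (n m : ℕ)
    (P F Q : List (Finset ℕ)) (hp : (P ++ (F ++ Q)).Pairwise Before)
    (hE : ∀ A ∈ P ++ (F ++ Q), A ⊆ E)
    (hPQ : P.length + Q.length ≤ n) (hF : F.length = m)
    (hP : ∀ A ∈ P, ∀ a ∈ A, n ≤ a) (hQ : ∀ A ∈ Q, ∀ a ∈ A, n ≤ a)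
    (hFm : ∀ A ∈ F, ∀ a ∈ A, m ≤ a) :
    ∃ t, (1 / 2) * ((P.map fun A => cut x A (s A)).sum + (F.map fun A => cut x A (s A)).sum
      + (Q.map fun A => cut x A (s A)).sum) ≤ cut x E t := by
  have below : ∀ (L : List (Finset ℕ)) (k : ℕ), (∀ A ∈ L, ∀ a ∈ A, k ≤ a) →
      ∀ A ∈ dbl s L, ∀ a ∈ A, k ≤ a := by
    intro L k h A hA a ha
    obtain ⟨B, hB, hAB⟩ := mem_dbl hA
    exact h B hB a (hAB ha)
  have inE : ∀ L : List (Finset ℕ), (∀ A ∈ L, A ⊆ E) → ∀ A ∈ dbl s L, A ⊆ E := by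
    intro L h A hA
    obtain ⟨B, hB, hAB⟩ := mem_dbl hA
    exact hAB.trans (h B hB)
  have key : ∀ (L₁ L₂ : List (Finset ℕ)) (n₁ n₂ : ℕ), (L₁ ++ L₂).Sublist (P ++ (F ++ Q)) →
      2 * L₁.length ≤ 3 * n₁ → 2 * L₂.length ≤ 3 * n₂ →
      (∀ A ∈ L₁, ∀ a ∈ A, n₁ ≤ a) → (∀ A ∈ L₂, ∀ a ∈ A, n₂ ≤ a) →
      ∃ t, (1 / 2) * ((L₁.map fun A => cut x A (s A)).sum
        + (L₂.map fun A => cut x A (s A)).sum) ≤ cut x E t := by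
    intro L₁ L₂ n₁ n₂ hsub h1 h2 h3 h4
    obtain ⟨t, ht⟩ := two_lists x E n₁ n₂ (dbl s L₁) (dbl s L₂)
      (by rw [← dbl_append]; exact pairwise_dbl s (hp.sublist hsub))
      (by rw [← dbl_append]; exact inE _ fun A hA => hE A (hsub.subset hA))
      (by rw [length_dbl]; exact h1) (by rw [length_dbl]; exact h2)
      (below _ _ h3) (below _ _ h4)
    rw [List.map_append, List.sum_append, sum_dbl, sum_dbl] at ht
    exact ⟨t, ht⟩
  by_cases hP0 : ∀ A ∈ P, A = ∅
  -- nothing precedes `F`, which then need not lie above `n`: separate `F` from `Q`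
  · obtain ⟨t, ht⟩ := key F Q m n (List.sublist_append_right _ _) (by omega) (by omega) hFm hQ
    exact ⟨t, by rwa [sum_cut_eq_zero x s P hP0, zero_add]⟩
  by_cases hF0 : ∀ A ∈ F, A = ∅
  · obtain ⟨t, ht⟩ := key P Q n n ((List.sublist_append_right _ _).append_left _)
      (by omega) (by omega) hP hQ
    exact ⟨t, by rwa [sum_cut_eq_zero x s F hF0, add_zero]⟩
  -- now `F` lies above a point of `P`, and `Q` lies above a point of `F`
  push Not at hP0 hF0
  obtain ⟨A₀, hA₀, a₀, ha₀⟩ := hP0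
  obtain ⟨B₀, hB₀, b₀, hb₀⟩ := hF0
  obtain ⟨-, hFQp, hPFQ⟩ := List.pairwise_append.1 hp
  obtain ⟨-, -, hFQ'⟩ := List.pairwise_append.1 hFQp
  have hFQn : ∀ A ∈ F ++ Q, ∀ a ∈ A, n ≤ a := fun A hA a ha =>
    (hP A₀ hA₀ a₀ ha₀).trans (hPFQ A₀ hA₀ A hA a₀ ha₀ a ha).le
  have hFQm : ∀ A ∈ F ++ Q, ∀ a ∈ A, m ≤ a := by
    intro A hA a ha
    rcases List.mem_append.1 hA with h | h
    · exact hFm A h a ha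
    · exact (hFm B₀ hB₀ b₀ hb₀).trans (hFQ' B₀ hB₀ A h b₀ hb₀ a ha).le
  -- the first group takes `3 n` pieces, leaving at most `2 (n + m) - 3 n ≤ 3 m` of them
  have happ : (dbl s P ++ (dbl s (F ++ Q)).take (3 * n - 2 * P.length))
      ++ (dbl s (F ++ Q)).drop (3 * n - 2 * P.length) = dbl s (P ++ (F ++ Q)) := by
    rw [List.append_assoc, List.take_append_drop, ← dbl_append]
  obtain ⟨t, ht⟩ := two_lists x E n m
    (dbl s P ++ (dbl s (F ++ Q)).take (3 * n - 2 * P.length))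
    ((dbl s (F ++ Q)).drop (3 * n - 2 * P.length))
    (by rw [happ]; exact pairwise_dbl s hp) (by rw [happ]; exact inE _ hE)
    (by
      rw [List.length_append, length_dbl, List.length_take]
      omega)
    (by
      rw [List.length_drop, length_dbl, List.length_append]
      omega)
    (by
      intro A hA
      rcases List.mem_append.1 hA with h | h
      · exact below P n hP A h
      · exact below _ n hFQn A (List.mem_of_mem_take h))
    (fun A hA => below _ m hFQm A (List.mem_of_mem_drop hA))
  rw [happ, sum_dbl, List.map_append, List.map_append, List.sum_append, List.sum_append,
    ← add_assoc] at ht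
  exact ⟨t, ht⟩

/-! ### The induction -/

theorem sum_map_filter_ite {α : Type*} (p : α → Prop) [DecidablePred p] (f : α → ℝ) (l : List α) :
    ((l.filter p).map f).sum = (l.map fun a => if p a then f a else 0).sum := by
  induction l with
  | nil => rfl
  | cons a l ih => by_cases h : p a <;> simp [h, ih]

theorem sum_erase_eq {n : ℕ} (i₀ : Fin n) (f : Fin n → ℝ) :
    ∑ i ∈ Finset.univ.erase i₀, f i = (((List.finRange n).filter (· < i₀)).map f).sum
      + (((List.finRange n).filter (i₀ < ·)).map f).sum := by
  rw [sum_map_filter_ite, sum_map_filter_ite, ← Fin.sum_univ_def, ← Fin.sum_univ_def,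
    ← Finset.sum_add_distrib, ← Finset.sum_erase_add _ _ (Finset.mem_univ i₀)]
  simp only [lt_irrefl, if_false, add_zero]
  refine Finset.sum_congr rfl fun i hi => ?_
  rcases lt_or_gt_of_ne (Finset.ne_of_mem_erase hi) with h | h
  · simp [h, h.not_gt]
  · simp [h, h.not_gt]

theorem length_filter_add {n : ℕ} (i₀ : Fin n) (l : List (Fin n)) :
    (l.filter (· < i₀)).length + (l.filter (i₀ < ·)).length ≤ l.length := by
  induction l with
  | nil => simp
  | cons a l ih =>
    rcases lt_trichotomy a i₀ with h | h | h
    · simp only [List.filter_cons, h, h.not_gt, decide_true, decide_false, if_true,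
        List.length_cons, Bool.false_eq_true, if_false]
      omega
    · subst h
      simp only [List.filter_cons, lt_irrefl, decide_false, List.length_cons,
        Bool.false_eq_true, if_false]
      omega
    · simp only [List.filter_cons, h, h.not_gt, decide_true, decide_false, if_true,
        List.length_cons, Bool.false_eq_true, if_false]
      omega

/-- The induction statement: each iterate of `N2` is dominated by a suitable cut. -/
theorem N2Aux_le_cut (x : ℕ →₀ ℝ) (k : ℕ) :
    ∀ E : Finset ℕ, ∃ s, N2Aux (1 / 2) k (restr E x) ≤ cut x E s := by
  have hsup : ∀ E : Finset ℕ, supNorm (restr E x) ≤ cut x E 0 := by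
    intro E
    have : E.filter (0 ≤ ·) = E := by simp
    rw [cut, this]
    linarith [supNorm_le_N4 (restr E x), N4_nonneg (restr (E.filter (· < 0)) x)]
  induction k with
  | zero => exact fun E => ⟨0, hsup E⟩
  | succ k ih =>
    intro E
    choose s hs using ih
    obtain ⟨s₀, hs₀⟩ := exists_max_cut x E
    have hnn : 0 ≤ cut x E s₀ := add_nonneg (N4_nonneg _) (N4_nonneg _)
    refine ⟨s₀, max_le ((hsup E).trans (hs₀ 0)) (Real.sSup_le ?_ hnn)⟩
    rintro _ ⟨n, G, i₀, hG, rfl⟩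
    have main : ∀ (m : ℕ) (F : Fin m → Finset ℕ), Admissible m F → Between G i₀ F →
        (1 / 2) * (∑ i ∈ Finset.univ.erase i₀, N2Aux (1 / 2) k (restr (G i) (restr E x)))
          + (1 / 2) * ∑ j, N2Aux (1 / 2) k (restr (F j) (restr E x)) ≤ cut x E s₀ := by
      intro m F hF hB
      have hmono : ∀ {l : ℕ} (H : Fin l → Finset ℕ) (L : List (Fin l)),
          (L.map fun i => N2Aux (1 / 2) k (restr (H i) (restr E x))).sum
            ≤ ((L.map fun i => H i ∩ E).map fun A => cut x A (s A)).sum := by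
        intro l H L
        rw [List.map_map]
        refine List.sum_le_sum fun i _ => ?_
        rw [restr_restr]
        exact hs _
      have hord : ∀ {l : ℕ} (H : Fin l → Finset ℕ) (L : List (Fin l)), L.Pairwise (· < ·) →
          (∀ i j, i < j → ∀ a ∈ H i, ∀ b ∈ H j, a < b) →
          (L.map fun i => H i ∩ E).Pairwise Before := by
        intro l H L hL hH
        refine List.pairwise_map.2 (hL.imp ?_)
        intro i j hij a ha b hb
        exact hH i j hij a (Finset.mem_inter.1 ha).1 b (Finset.mem_inter.1 hb).1
      have hlt : ∀ l : ℕ, (List.finRange l).Pairwise (· < ·) := fun l => List.pairwise_lt_finRange l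
      obtain ⟨t, ht⟩ := regroup x E s n m
        (((List.finRange n).filter (· < i₀)).map fun i => G i ∩ E)
        ((List.finRange m).map fun j => F j ∩ E)
        (((List.finRange n).filter (i₀ < ·)).map fun i => G i ∩ E)
        (by
          refine List.pairwise_append.2 ⟨hord G _ ((hlt n).filter _) hG.1,
            List.pairwise_append.2 ⟨hord F _ (hlt m) hF.1, hord G _ ((hlt n).filter _) hG.1, ?_⟩, ?_⟩
          · intro A hA B hB' a ha b hb
            simp only [List.mem_map, List.mem_filter, List.mem_finRange, true_and,
              decide_eq_true_eq] at hA hB'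
            obtain ⟨j, rfl⟩ := hA
            obtain ⟨i, hi, rfl⟩ := hB'
            exact (hB j a (Finset.mem_inter.1 ha).1).2 i hi b (Finset.mem_inter.1 hb).1
          · intro A hA B hB' a ha b hb
            simp only [List.mem_append, List.mem_map, List.mem_filter, List.mem_finRange, true_and,
              decide_eq_true_eq] at hA hB'
            obtain ⟨i, hi, rfl⟩ := hA
            rcases hB' with ⟨j, rfl⟩ | ⟨j, hj, rfl⟩
            · exact (hB j b (Finset.mem_inter.1 hb).1).1 i hi a (Finset.mem_inter.1 ha).1
            · exact hG.1 i j (hi.trans hj) a (Finset.mem_inter.1 ha).1 b (Finset.mem_inter.1 hb).1)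
        (by
          intro A hA
          simp only [List.mem_append, List.mem_map] at hA
          rcases hA with ⟨i, _, rfl⟩ | ⟨i, _, rfl⟩ | ⟨i, _, rfl⟩ <;> exact Finset.inter_subset_right)
        (by simpa using length_filter_add i₀ (List.finRange n))
        (by simp)
        (by
          intro A hA a ha
          obtain ⟨i, _, rfl⟩ := List.mem_map.1 hA
          exact hG.2 i a (Finset.mem_inter.1 ha).1)
        (by
          intro A hA a ha
          obtain ⟨i, _, rfl⟩ := List.mem_map.1 hA
          exact hG.2 i a (Finset.mem_inter.1 ha).1)
        (by
          intro A hA a ha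
          obtain ⟨i, _, rfl⟩ := List.mem_map.1 hA
          exact hF.2 i a (Finset.mem_inter.1 ha).1)
      rw [sum_erase_eq, Fin.sum_univ_def]
      have h1 := hmono G ((List.finRange n).filter (· < i₀))
      have h2 := hmono G ((List.finRange n).filter (i₀ < ·))
      have h3 := hmono F (List.finRange m)
      linarith [hs₀ t]
    -- the empty family `F` shows that the remaining room for the inner supremum is nonnegative
    have h0 := main 0 Fin.elim0 ⟨fun i => i.elim0, fun i => i.elim0⟩ (fun j => j.elim0)
    simp only [Finset.univ_eq_empty, Finset.sum_empty, mul_zero, add_zero] at h0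
    have hin : sSup {t : ℝ | ∃ (m : ℕ) (F : Fin m → Finset ℕ), Admissible m F ∧ Between G i₀ F ∧
        t = ∑ j, N2Aux (1 / 2) k (restr (F j) (restr E x))} ≤
        2 * (cut x E s₀ - (1 / 2) *
          ∑ i ∈ Finset.univ.erase i₀, N2Aux (1 / 2) k (restr (G i) (restr E x))) := by
      refine Real.sSup_le ?_ (by linarith)
      rintro _ ⟨m, F, hF, hB, rfl⟩
      linarith [main m F hF hB]
    linarith

/-- `N^{(2)}(x) ≤ 2 N^{(4)}(x)` for every finitely supported `x`, where
`N^{(2)} = N_{1/2}^{(2)}`. -/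
theorem stmt17 : ∀ x : ℕ →₀ ℝ, N2 (1 / 2) x ≤ 2 * N4 x := by
  intro x
  refine ciSup_le fun k => ?_
  obtain ⟨s, hs⟩ := N2Aux_le_cut x k x.support
  rw [restr_support] at hs
  refine hs.trans ?_
  rw [cut, two_mul]
  exact add_le_add (N4_restr_le _ x) (N4_restr_le _ x)
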